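/- Let j ≥ 2 and N = 4j−1. Let p : ℚ^N → U_N be the S_N-equivariant projection p(x) = x − ((∑_i x_i)/N)·(1,…,1) onto the sum-zero hyperplane U_N = { x ∈ ℚ^N : ∑_i x_i = 0 }, and let Λ^{2j} p : Λ^{2j} ℚ^N → Λ^{2j} U_N be the induced map on exterior powers. Then the ℚ[S_N]-submodule K of Λ^{2j} ℚ^N generated by ρ equals the kernel of Λ^{2j} p. (In particular ρ ≠ 0 and Λ^{2j}p(ρ) = 0; this identifies K with the kernel of the surjection from the induced representation Ind_{S_{2j−1} × S_{2j}}^{S_{4j−1}}(triv ⊠ sgn) onto the hook V_{2j−1,1^{2j}}.) -/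

import Mathlib

set_option synthInstance.maxHeartbeats 1000000
set_option maxHeartbeats 1000000

noncomputable section

open ExteriorAlgebra

/-- The standard basis vector `e_{m+1}` of `ℚ^{4j−1}` (with `0`-based index `m`). -/
def ε (j : ℕ) (m : Fin (4*j-1)) : Fin (4*j-1) → ℚ := Pi.single m 1

/-- The action of `S_N` on the exterior algebra of `ℚ^N` induced by permuting the standard
basis vectors (`g` sends `e_m` to `e_{g m}`). -/
def pact (N : ℕ) (g : Equiv.Perm (Fin N)) :
    ExteriorAlgebra ℚ (Fin N → ℚ) →ₗ[ℚ] ExteriorAlgebra ℚ (Fin N → ℚ) :=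
  (ExteriorAlgebra.map (LinearMap.funLeft ℚ ℚ ⇑g⁻¹)).toLinearMap

/-- The element of the `i`-th loop `B_i = {2i+2, 2i+3}` (1-indexed; here `i` is `0`-based)
selected by the Boolean `b`. -/
def idx (j : ℕ) (k : Fin (2*j-2)) (b : Bool) : Fin (4*j-1) :=
  ⟨2*(k : ℕ) + 3 + b.toNat, by have := Bool.toNat_lt b; omega⟩

/-- `S_I`: the sum, over all choices of one element `s_i ∈ B_i` for each loop `i ∉ I`, of the
wedge products `e_{s_{i_1}} ∧ ⋯ ∧ e_{s_{i_m}}` taken in increasing order of the loop indices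
`i ∉ I`. -/
def SI (j : ℕ) (I : Finset (Fin (2*j-2))) : ExteriorAlgebra ℚ (Fin (4*j-1) → ℚ) :=
  ∑ c ∈ Finset.univ.filter (fun c : Fin (2*j-2) → Bool => ∀ i ∈ I, c i = false),
    (List.ofFn fun k : Fin (2*j-2) =>
      if k ∈ I then 1 else ExteriorAlgebra.ι ℚ (ε j (idx j k (c k)))).prod

/-- The wedge `e_{2j} ∧ e_{2j+1} ∧ ⋯ ∧ e_{4j−1}`. -/
def ρbase (j : ℕ) : ExteriorAlgebra ℚ (Fin (4*j-1) → ℚ) :=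
  (List.ofFn fun k : Fin (2*j) =>
    ExteriorAlgebra.ι ℚ (ε j ⟨2*j - 1 + (k : ℕ), by omega⟩)).prod

/-- `ρ = (1 + ∑_{i=1}^{2j−1} (i 2j)) · (e_{2j} ∧ e_{2j+1} ∧ ⋯ ∧ e_{4j−1})`. -/
def ρElt (j : ℕ) : ExteriorAlgebra ℚ (Fin (4*j-1) → ℚ) :=
  ρbase j + ∑ m : Fin (2*j-1),
    pact (4*j-1) (Equiv.swap (⟨(m : ℕ), by omega⟩ : Fin (4*j-1)) ⟨2*j - 1, by have := m.isLt; omega⟩) (ρbase j)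

/-- `K`: the `ℚ[S_{4j−1}]`-submodule of `W = Λ^{2j} ℚ^{4j−1}` generated by `ρ`, i.e. the span
of the `S_{4j−1}`-orbit of `ρ`. -/
def Ksub (j : ℕ) : Submodule ℚ (ExteriorAlgebra ℚ (Fin (4*j-1) → ℚ)) :=
  Submodule.span ℚ (Set.range fun g : Equiv.Perm (Fin (4*j-1)) => pact (4*j-1) g (ρElt j))

end

noncomputable section

/-- The sum-of-coordinates linear functional on `ℚ^N`. -/
def sumMap (N : ℕ) : (Fin N → ℚ) →ₗ[ℚ] ℚ := ∑ i, LinearMap.proj i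

/-- The standard representation `U_N = {x ∈ ℚ^N : ∑ x_i = 0}` of the symmetric group. -/
def U (N : ℕ) : Submodule ℚ (Fin N → ℚ) := LinearMap.ker (sumMap N)

lemma mem_U {N : ℕ} (x : Fin N → ℚ) : x ∈ U N ↔ ∑ i, x i = 0 := by
  simp [U, sumMap, LinearMap.mem_ker]

/-- The constant-functions embedding `ℚ → ℚ^N`. -/
def constF (N : ℕ) : ℚ →ₗ[ℚ] (Fin N → ℚ) := LinearMap.pi fun _ => LinearMap.id

/-- The endomorphism `x ↦ x − ((∑_i x_i)/N)·(1,…,1)` of `ℚ^N`. -/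
def pEndo (N : ℕ) : (Fin N → ℚ) →ₗ[ℚ] (Fin N → ℚ) :=
  LinearMap.id - (N : ℚ)⁻¹ • (constF N ∘ₗ sumMap N)

lemma pEndo_apply {N : ℕ} (x : Fin N → ℚ) (i : Fin N) :
    pEndo N x i = x i - (N : ℚ)⁻¹ * (∑ j, x j) := by
  simp [pEndo, constF, sumMap, LinearMap.sub_apply]

/-- The `S_N`-equivariant projection `p : ℚ^N → U_N`,
`p(x) = x − ((∑_i x_i)/N)·(1,…,1)`. -/
def pU (N : ℕ) : (Fin N → ℚ) →ₗ[ℚ] ↥(U N) :=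
  (pEndo N).codRestrict (U N) (fun x => by
    rw [mem_U]
    rcases Nat.eq_zero_or_pos N with hN | hN
    · subst hN
      simp
    · have hN' : (N : ℚ) ≠ 0 := Nat.cast_ne_zero.mpr (by omega)
      rw [Finset.sum_congr rfl (fun i _ => pEndo_apply x i), Finset.sum_sub_distrib,
        Finset.sum_const, Finset.card_univ, Fintype.card_fin, nsmul_eq_mul, ← mul_assoc,
        mul_inv_cancel₀ hN', one_mul, sub_self])

end

noncomputable section

/-!
Put `σ = e_1 + ⋯ + e_N`. In `σ ∧ e_{2j+1} ∧ ⋯ ∧ e_{4j-1}` the summands of `σ` that repeat a factor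
vanish and the remaining ones are the terms of `ρ`, so `ρ = σ ∧ e_{2j+1} ∧ ⋯ ∧ e_{4j-1}`.
Permutations fix `σ` and act transitively on injective tuples of basis vectors, hence
`K = σ ∧ Λ^{2j-1} ℚ^N`.

On the other side `p = id - φ ⊗ σ` with `φ` the mean of the coordinates. As `σ ∧ σ = 0`, expanding
`Λp` stops at first order: `Λp x = x - σ ∧ (φ ⌋ x)`. So `Λp x = 0` forces `x = σ ∧ (φ ⌋ x)`, where
`φ ⌋ x` may be replaced by its component in `Λ^{2j-1} ℚ^N`, and conversely `Λp` kills every multiple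
of `σ` because `p σ = 0`.
-/

section Kernel

open ExteriorAlgebra

variable {R M M' : Type*} [CommRing R] [AddCommGroup M] [Module R M] [AddCommGroup M'] [Module R M']

theorem exteriorAlgebra_map_id_sub_smulRight (φ : Module.Dual R M) (e : M)
    (x : ExteriorAlgebra R M) :
    map (LinearMap.id - φ.smulRight e) x =
      x - ι R e * CliffordAlgebra.contractLeft (Q := 0) φ x := by
  induction x using CliffordAlgebra.left_induction with
  | algebraMap r => simp
  | add x y hx hy =>
    rw [map_add, hx, hy, map_add, mul_add]
    abel
  | ι_mul x m hx =>
    set c := CliffordAlgebra.contractLeft (Q := 0) φ x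
    have h_swap : ι R m * ι R e = -(ι R e * ι R m) :=
      eq_neg_of_add_eq_zero_left (ι_add_mul_swap m e)
    calc map (LinearMap.id - φ.smulRight e) (ι R m * x)
        = (ι R m - φ m • ι R e) * (x - ι R e * c) := by
          rw [map_mul, hx, map_apply_ι, LinearMap.sub_apply, LinearMap.id_apply,
            LinearMap.smulRight_apply, map_sub, map_smul]
      _ = ι R m * x - ι R m * ι R e * c - φ m • (ι R e * x - ι R e * ι R e * c) := by
          simp only [sub_mul, mul_sub, smul_mul_assoc, smul_sub, mul_assoc]
          abel
      _ = ι R m * x - (φ m • (ι R e * x) - ι R e * ι R m * c) := by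
          rw [h_swap, ι_sq_zero, zero_mul, sub_zero, neg_mul]
          abel
      _ = ι R m * x - ι R e * CliffordAlgebra.contractLeft (Q := 0) φ (ι R m * x) := by
          rw [CliffordAlgebra.contractLeft_ι_mul, mul_sub, mul_smul_comm, mul_assoc]

theorem ι_mul_mem_exteriorPower (e : M) {n : ℕ} {y : ExteriorAlgebra R M} (hy : y ∈ ⋀[R]^n M) :
    ι R e * y ∈ ⋀[R]^(n + 1) M := by
  rw [exteriorPower, pow_succ']
  exact Submodule.mul_mem_mul (LinearMap.mem_range_self _ e) hy

theorem exists_mem_exteriorPower_ι_mul_eq (e : M) {n : ℕ} {y : ExteriorAlgebra R M}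
    (hy : ι R e * y ∈ ⋀[R]^(n + 1) M) : ∃ z ∈ ⋀[R]^n M, ι R e * z = ι R e * y := by
  let 𝒜 : ℕ → Submodule R (ExteriorAlgebra R M) := fun i => ⋀[R]^i M
  have he : ι R e ∈ 𝒜 1 := by
    simpa only [𝒜, exteriorPower, pow_one] using LinearMap.mem_range_self _ e
  refine ⟨DirectSum.decompose 𝒜 y n, SetLike.coe_mem _, ?_⟩
  rw [← DirectSum.coe_decompose_mul_add_of_left_mem 𝒜 he, add_comm 1 n,
    DirectSum.decompose_of_mem_same 𝒜 hy]

theorem exteriorPower_succ_inf_ker_map {φ : Module.Dual R M} {e : M} {p : M →ₗ[R] M'}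
    {s : M' →ₗ[R] M} (hpe : p e = 0) (hsp : s ∘ₗ p = LinearMap.id - φ.smulRight e) (n : ℕ) :
    ⋀[R]^(n + 1) M ⊓ LinearMap.ker (map p).toLinearMap =
      (⋀[R]^n M).map (LinearMap.mulLeft R (ι R e)) := by
  apply le_antisymm
  · rintro x ⟨hx, hpx⟩
    have h_id_sub : map (LinearMap.id - φ.smulRight e) x = 0 := by
      rw [← hsp, ← map_comp_map, AlgHom.comp_apply]
      exact (congrArg (map s) hpx).trans (map_zero _)
    have hx_eq : x = ι R e * CliffordAlgebra.contractLeft (Q := 0) φ x := by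
      rwa [exteriorAlgebra_map_id_sub_smulRight, sub_eq_zero] at h_id_sub
    obtain ⟨z, hz, hez⟩ := exists_mem_exteriorPower_ι_mul_eq e (hx_eq ▸ hx)
    exact ⟨z, hz, hez.trans hx_eq.symm⟩
  · rintro _ ⟨y, hy, rfl⟩
    refine ⟨ι_mul_mem_exteriorPower e hy, ?_⟩
    simp [hpe]

end Kernel

section PermutationAction

open ExteriorAlgebra

variable {N n m : ℕ}

/-- The wedge `e_{f 0} ∧ ⋯ ∧ e_{f (n-1)}` of standard basis vectors of `ℚ^N`. Repeated indices are
allowed (the wedge is then `0`), so that these wedges are closed under composing `f` with maps. -/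
def coordWedge (f : Fin n → Fin N) : ExteriorAlgebra ℚ (Fin N → ℚ) :=
  ιMulti ℚ n fun k => Pi.single (f k) 1

theorem coordWedge_succ (f : Fin (n + 1) → Fin N) :
    coordWedge f = ι ℚ (Pi.single (f 0) 1) * coordWedge (Fin.tail f) :=
  ιMulti_succ_apply _

theorem coordWedge_eq_zero {f : Fin n → Fin N} (hf : ¬ f.Injective) : coordWedge f = 0 :=
  ιMulti_eq_zero_of_not_inj fun h =>
    hf fun _ _ hab => h (congrArg (fun i => (Pi.single i 1 : Fin N → ℚ)) hab)

theorem ι_single_mul_coordWedge (f : Fin n → Fin N) (k : Fin n) :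
    ι ℚ (Pi.single (f k) 1) * coordWedge f = 0 :=
  ι_mul_prod_list (fun k => Pi.single (f k) 1) k

theorem span_range_coordWedge :
    Submodule.span ℚ (Set.range (coordWedge : (Fin n → Fin N) → _)) = ⋀[ℚ]^n (Fin N → ℚ) := by
  rw [← exteriorPower.ιMulti_span_fixedDegree_of_span_eq_top ℚ n _ (Pi.basisFun ℚ (Fin N)).span_eq]
  congr 1
  ext x
  constructor
  · rintro ⟨f, rfl⟩
    refine ⟨_, ?_, rfl⟩
    rintro _ ⟨k, rfl⟩
    exact ⟨f k, Pi.basisFun_apply ℚ _ _⟩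
  · rintro ⟨v, hv, rfl⟩
    choose f hf using fun k => hv (Set.mem_range_self k)
    simp only [Pi.basisFun_apply] at hf
    exact ⟨f, congrArg (ιMulti ℚ n) (funext hf)⟩

theorem funLeft_inv_single {R M I : Type*} [Semiring R] [AddCommMonoid M] [Module R M]
    [DecidableEq I] (g : Equiv.Perm I) (i : I) (a : M) :
    LinearMap.funLeft R M ⇑g⁻¹ (Pi.single i a) = Pi.single (g i) a :=
  Pi.single_comp_equiv g⁻¹ i a

theorem pact_mul (g : Equiv.Perm (Fin N)) (x y : ExteriorAlgebra ℚ (Fin N → ℚ)) :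
    pact N g (x * y) = pact N g x * pact N g y :=
  map_mul (map (LinearMap.funLeft ℚ ℚ ⇑g⁻¹)) x y

theorem pact_ι_one (g : Equiv.Perm (Fin N)) : pact N g (ι ℚ 1) = ι ℚ 1 :=
  map_apply_ι _ _

theorem pact_coordWedge (g : Equiv.Perm (Fin N)) (f : Fin n → Fin N) :
    pact N g (coordWedge f) = coordWedge (g ∘ f) := by
  simp only [pact, coordWedge, AlgHom.toLinearMap_apply, map_apply_ιMulti, Function.comp_def,
    funLeft_inv_single]

theorem span_range_pact_coordWedge {f : Fin n → Fin N} (hf : f.Injective) :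
    Submodule.span ℚ (Set.range fun g => pact N g (coordWedge f)) = ⋀[ℚ]^n (Fin N → ℚ) := by
  simp only [pact_coordWedge]
  rw [← span_range_coordWedge]
  apply le_antisymm
  · apply Submodule.span_mono
    rintro _ ⟨g, rfl⟩
    exact ⟨g ∘ f, rfl⟩
  · rw [Submodule.span_le]
    rintro _ ⟨f', rfl⟩
    by_cases hf' : f'.Injective
    · obtain ⟨g, hg⟩ := Equiv.Perm.exists_extending_pair f f' hf hf'
      exact Submodule.subset_span ⟨g, congrArg coordWedge (funext hg)⟩
    · rw [coordWedge_eq_zero hf']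
      exact zero_mem _

theorem span_range_pact_ι_one_mul_coordWedge {f : Fin n → Fin N} (hf : f.Injective) :
    Submodule.span ℚ (Set.range fun g => pact N g (ι ℚ 1 * coordWedge f)) =
      (⋀[ℚ]^n (Fin N → ℚ)).map (LinearMap.mulLeft ℚ (ι ℚ 1)) := by
  rw [← span_range_pact_coordWedge hf, Submodule.map_span, ← Set.range_comp]
  simp only [pact_mul, pact_ι_one, Function.comp_def, LinearMap.mulLeft_apply]

/-- The analogue of `ρ` for an arbitrary tuple of basis vectors: the element
`(1 + ∑_i (i f(0))) · (e_{f 0} ∧ ⋯ ∧ e_{f (m-1)})`, with `i` running over the indices outside the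
range of `f`. -/
def swapSum [NeZero m] (f : Fin m → Fin N) : ExteriorAlgebra ℚ (Fin N → ℚ) :=
  coordWedge f + ∑ i ∈ (Finset.univ.image f)ᶜ, pact N (Equiv.swap i (f 0)) (coordWedge f)

theorem pact_swap_coordWedge {f : Fin (n + 1) → Fin N} (hf : f.Injective) {i : Fin N}
    (hi : ∀ k, f k ≠ i) :
    pact N (Equiv.swap i (f 0)) (coordWedge f) =
      ι ℚ (Pi.single i 1) * coordWedge (Fin.tail f) := by
  have h_tail : Equiv.swap i (f 0) ∘ Fin.tail f = Fin.tail f := funext fun k =>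
    Equiv.swap_apply_of_ne_of_ne (hi k.succ) (hf.ne k.succ_ne_zero)
  rw [pact_coordWedge, coordWedge_succ, Function.comp_apply, Equiv.swap_apply_right]
  exact congrArg (fun t => _ * coordWedge t) h_tail

theorem swapSum_eq_ι_one_mul {f : Fin (n + 1) → Fin N} (hf : f.Injective) :
    swapSum f = ι ℚ 1 * coordWedge (Fin.tail f) := by
  have h_one : (1 : Fin N → ℚ) = ∑ i, Pi.single i 1 := (Finset.univ_sum_single 1).symm
  have h_image : ∑ i ∈ Finset.univ.image f, ι ℚ (Pi.single i 1) * coordWedge (Fin.tail f) =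
      coordWedge f := by
    rw [Finset.sum_image hf.injOn, Fin.sum_univ_succ, ← coordWedge_succ, add_eq_left]
    exact Finset.sum_eq_zero fun k _ => ι_single_mul_coordWedge (Fin.tail f) k
  rw [h_one, map_sum, Finset.sum_mul, ← Finset.sum_add_sum_compl (Finset.univ.image f), h_image,
    swapSum]
  congr 1
  refine Finset.sum_congr rfl fun i hi => pact_swap_coordWedge hf fun k hk => ?_
  simp [← hk] at hi

end PermutationAction

theorem pU_one (N : ℕ) : pU N 1 = 0 := by
  ext i
  have hN : (N : ℚ) ≠ 0 := Nat.cast_ne_zero.mpr i.pos.ne'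
  exact (pEndo_apply 1 i).trans (by simp [hN])

theorem subtype_comp_pU (N : ℕ) :
    (U N).subtype ∘ₗ pU N = LinearMap.id - ((N : ℚ)⁻¹ • sumMap N).smulRight 1 := by
  refine LinearMap.ext fun v => funext fun i => ?_
  exact (pEndo_apply v i).trans (by simp [sumMap])

theorem stmt11_general {N m : ℕ} [NeZero m] {f : Fin m → Fin N} (hf : f.Injective) :
    Submodule.span ℚ (Set.range fun g => pact N g (swapSum f)) =
      ⋀[ℚ]^m (Fin N → ℚ) ⊓ LinearMap.ker (ExteriorAlgebra.map (pU N)).toLinearMap := by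
  obtain ⟨n, rfl⟩ := Nat.exists_eq_succ_of_ne_zero (NeZero.ne m)
  rw [exteriorPower_succ_inf_ker_map (pU_one N) (subtype_comp_pU N), swapSum_eq_ι_one_mul hf,
    span_range_pact_ι_one_mul_coordWedge (f := Fin.tail f) (hf.comp (Fin.succ_injective n))]

/-- The (`0`-based) indices `2j-1, …, 4j-2` of the factors of `e_{2j} ∧ ⋯ ∧ e_{4j-1}`. -/
def lastIdx (j : ℕ) (k : Fin (2 * j)) : Fin (4 * j - 1) := ⟨2 * j - 1 + k, by omega⟩

theorem lastIdx_injective (j : ℕ) : (lastIdx j).Injective := fun _ _ h =>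
  Fin.ext (Nat.add_left_cancel (Fin.mk.inj h))

theorem ρElt_eq_swapSum (j : ℕ) [NeZero j] : ρElt j = swapSum (lastIdx j) := by
  have h_compl : (Finset.univ.image (lastIdx j))ᶜ =
      Finset.univ.map (Fin.castLEEmb (by omega : 2 * j - 1 ≤ 4 * j - 1)) := by
    ext i
    have h_range : (∃ k, lastIdx j k = i) ↔ 2 * j - 1 ≤ i :=
      ⟨by rintro ⟨k, rfl⟩; exact Nat.le_add_right _ _,
        fun h => ⟨⟨i - (2 * j - 1), by omega⟩, Fin.ext (Nat.add_sub_of_le h)⟩⟩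
    have h_first : (∃ k, Fin.castLEEmb (by omega : 2 * j - 1 ≤ 4 * j - 1) k = i) ↔
        i < 2 * j - 1 :=
      ⟨by rintro ⟨k, rfl⟩; exact k.isLt, fun h => ⟨⟨i, h⟩, rfl⟩⟩
    simp only [Finset.mem_compl, Finset.mem_image, Finset.mem_map, Finset.mem_univ, true_and,
      h_range, h_first, not_le]
  rw [swapSum, h_compl, Finset.sum_map]
  rfl

/-- For `j ≥ 2` and `N = 4j−1`, the `ℚ[S_N]`-submodule `K ⊆ Λ^{2j} ℚ^N`
generated by `ρ` equals the kernel of the map `Λ^{2j} p : Λ^{2j} ℚ^N → Λ^{2j} U_N` induced by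
the equivariant projection `p : ℚ^N → U_N` onto the sum-zero hyperplane (expressed inside the
exterior algebras: `K = Λ^{2j} ℚ^N ⊓ ker(ExteriorAlgebra.map p)`). -/
theorem stmt11 (j : ℕ) (hj : 2 ≤ j) :
    Ksub j = (⋀[ℚ]^(2*j) (Fin (4*j-1) → ℚ)) ⊓
      LinearMap.ker (ExteriorAlgebra.map (pU (4*j-1))).toLinearMap := by
  have : NeZero j := ⟨by omega⟩
  rw [Ksub, ρElt_eq_swapSum, stmt11_general (lastIdx_injective j)]

end
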